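/- Every S-parking set D of the finite sets A_1,…,A_k is a k-element subset of A_1 ∪ A_2 ∪ ⋯ ∪ A_k. -/

import Mathlib

/-- `⋁_{i ∈ I} A i`: the (finite) set of elements belonging to exactly one of the
sets `A i` with `i ∈ I`. -/
def onlyOne {α : Type*} [DecidableEq α] {k : ℕ} (A : Fin k → Finset α)
    (I : Finset (Fin k)) : Finset α :=
  (I.biUnion A).filter fun e => (I.filter fun i => e ∈ A i).card = 1

/-- `D` is an S-parking set of the sets `A 0, …, A (k-1)`. -/
def IsSParkingSet {α : Type*} [DecidableEq α] {k : ℕ} (A : Fin k → Finset α)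
    (D : Finset α) : Prop :=
  D.card = k ∧ ∀ I : Finset (Fin k), I.Nonempty → (D ∩ onlyOne A I).Nonempty

/-!
If every nonempty set `I` of indices has a point lying in exactly one of the sets `B i`, `i ∈ I`,
then deleting from `I` the index that owns this point loses the point from the union. By induction
a union of `n` of the sets has at least `n` points. Applied to the traces `D ∩ A i`, this leaves a
set `D` with at most as many points as there are indices no point outside `⋃ i, A i`.
-/

theorem card_le_card_biUnion_of_existsUnique_mem {ι α : Type*} [DecidableEq α] (B : ι → Finset α)
    (s : Finset ι) (h : ∀ I ⊆ s, I.Nonempty → ∃ e, ∃! i, i ∈ I ∧ e ∈ B i) :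
    s.card ≤ (s.biUnion B).card := by
  classical
  induction s using Finset.strongInduction with
  | H s ih =>
    obtain rfl | hs := s.eq_empty_or_nonempty
    · simp
    obtain ⟨e, i, ⟨his, hei⟩, hunique⟩ := h s subset_rfl hs
    have erase_le : (s.erase i).card ≤ ((s.erase i).biUnion B).card :=
      ih _ (Finset.erase_ssubset his) fun I hI => h I (hI.trans (s.erase_subset i))
    have e_notMem : e ∉ (s.erase i).biUnion B := by
      simp only [Finset.mem_biUnion, Finset.mem_erase, not_exists, not_and]
      exact fun j ⟨hji, hjs⟩ hej => hji (hunique j ⟨hjs, hej⟩)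
    have insert_subset : insert e ((s.erase i).biUnion B) ⊆ s.biUnion B :=
      Finset.insert_subset (Finset.mem_biUnion.mpr ⟨i, his, hei⟩)
        (Finset.biUnion_subset_biUnion_of_subset_left B (s.erase_subset i))
    calc s.card = (s.erase i).card + 1 := (Finset.card_erase_add_one his).symm
      _ ≤ ((s.erase i).biUnion B).card + 1 := Nat.add_le_add_right erase_le 1
      _ = (insert e ((s.erase i).biUnion B)).card := (Finset.card_insert_of_notMem e_notMem).symm
      _ ≤ (s.biUnion B).card := Finset.card_le_card insert_subset

theorem sparking_set_subset_union_general {ι α : Type*} [Fintype ι] (A : ι → Set α) (D : Finset α)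
    (hcard : D.card ≤ Fintype.card ι)
    (h : ∀ I : Finset ι, I.Nonempty → ∃ e ∈ D, ∃! i, i ∈ I ∧ e ∈ A i) :
    D.card = Fintype.card ι ∧ (D : Set α) ⊆ ⋃ i, A i := by
  classical
  let trace (i : ι) : Finset α := D.filter (· ∈ A i)
  have trace_subset : Finset.univ.biUnion trace ⊆ D :=
    Finset.biUnion_subset.mpr fun i _ => D.filter_subset (· ∈ A i)
  have card_le : Fintype.card ι ≤ (Finset.univ.biUnion trace).card := by
    refine card_le_card_biUnion_of_existsUnique_mem trace Finset.univ fun I _ hI => ?_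
    obtain ⟨e, heD, he⟩ := h I hI
    exact ⟨e, by simpa only [trace, Finset.mem_filter, heD, true_and] using he⟩
  have trace_eq : Finset.univ.biUnion trace = D :=
    Finset.eq_of_subset_of_card_le trace_subset (hcard.trans card_le)
  refine ⟨hcard.antisymm (card_le.trans (Finset.card_le_card trace_subset)), fun e he => ?_⟩
  obtain ⟨i, -, hei⟩ := Finset.mem_biUnion.mp (trace_eq.symm.subset he)
  exact Set.mem_iUnion.mpr ⟨i, (Finset.mem_filter.mp hei).2⟩

theorem mem_onlyOne {α : Type*} [DecidableEq α] {k : ℕ} {A : Fin k → Finset α}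
    {I : Finset (Fin k)} {e : α} : e ∈ onlyOne A I ↔ ∃! i, i ∈ I ∧ e ∈ A i := by
  have mem_biUnion_of_unique (he : ∃! i, i ∈ I ∧ e ∈ A i) : e ∈ I.biUnion A :=
    Finset.mem_biUnion.mpr he.exists
  simpa only [onlyOne, Finset.mem_filter, Finset.card_eq_one, Finset.singleton_iff_unique_mem,
    and_iff_right_iff_imp] using mem_biUnion_of_unique

theorem IsSParkingSet.exists_existsUnique_mem {α : Type*} [DecidableEq α] {k : ℕ}
    {A : Fin k → Finset α} {D : Finset α} (hD : IsSParkingSet A D) (I : Finset (Fin k))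
    (hI : I.Nonempty) : ∃ e ∈ D, ∃! i, i ∈ I ∧ e ∈ A i := by
  obtain ⟨e, he⟩ := hD.2 I hI
  exact ⟨e, Finset.mem_of_mem_inter_left he, mem_onlyOne.mp (Finset.mem_of_mem_inter_right he)⟩

theorem sparking_set_subset_union {α : Type*} [DecidableEq α] {k : ℕ}
    (A : Fin k → Finset α) (D : Finset α) (hD : IsSParkingSet A D) :
    D.card = k ∧ D ⊆ Finset.univ.biUnion A := by
  simpa [← Finset.coe_subset] using sparking_set_subset_union_general (fun i => (A i : Set α)) D
    (by simp [hD.1]) hD.exists_existsUnique_mem
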